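/- (Newtonian mechanics as a Finsler system.) Let n ≥ 1, m > 0, and let V : ℝⁿ → ℝ be C¹. Define F on (ℝ × ℝⁿ) × (ℝ × ℝⁿ), writing x = (x⁰, x⃗), y = (y⁰, y⃗), by F(x, y) := (m/2)·‖y⃗‖²/y⁰ − V(x⃗)·y⁰ (for y⁰ ≠ 0; the value at y⁰ = 0 is irrelevant). Then: (a) F is positively homogeneous of degree 1 in y on the region y⁰ ≠ 0, i.e. F(x, λ • y) = λ·F(x, y) for all λ > 0 and y⁰ ≠ 0; and (b) for every C² map q : ℝ → ℝⁿ and t₁ < t₂, the curve σ(t) := (t, q(t)) satisfies the Euler–Lagrange equations of F on [t₁, t₂] (all n + 1 components of the Euler–Lagrange covector E(t) vanish) if and only if m·q″(t) = −∇V(q(t)) for all t ∈ [t₁, t₂], i.e. m·⟨q″(t), w⟩ = −DV(q(t))(w) for all w ∈ ℝⁿ. -/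

import Mathlib

open scoped RealInnerProductSpace

/-- The Euler–Lagrange covector of a Lagrangian `F` on `(ℝ × ℝⁿ) × (ℝ × ℝⁿ)` along a curve
`σ : ℝ → ℝ × ℝⁿ`, evaluated at time `t` on the test vector `h`. -/
noncomputable def eulerLagrange (n : ℕ)
    (F : (ℝ × EuclideanSpace ℝ (Fin n)) × (ℝ × EuclideanSpace ℝ (Fin n)) → ℝ)
    (σ : ℝ → ℝ × EuclideanSpace ℝ (Fin n)) (t : ℝ) (h : ℝ × EuclideanSpace ℝ (Fin n)) : ℝ :=
  (fderiv ℝ (fun x => fderiv ℝ (fun y => F (x, y)) (deriv σ t)) (σ t)) h (deriv σ t)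
    - deriv (fun s => fderiv ℝ (fun y => F (σ s, y)) (deriv σ s) h) t

theorem aux_fderiv (n : ℕ) (m : ℝ) (V : EuclideanSpace ℝ (Fin n) → ℝ)
    (F : (ℝ × EuclideanSpace ℝ (Fin n)) × (ℝ × EuclideanSpace ℝ (Fin n)) → ℝ)
    (hFdef : ∀ (x y : ℝ × EuclideanSpace ℝ (Fin n)), y.1 ≠ 0 →
      F (x, y) = m / 2 * ‖y.2‖ ^ 2 / y.1 - V x.2 * y.1)
    (x : ℝ × EuclideanSpace ℝ (Fin n)) (v : EuclideanSpace ℝ (Fin n)) :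
    fderiv ℝ (fun y => F (x, y)) (1, v) =
      m • ((innerSL ℝ v).comp (ContinuousLinearMap.snd ℝ ℝ (EuclideanSpace ℝ (Fin n))))
      - (m / 2 * ‖v‖ ^ 2 + V x.2) •
        ContinuousLinearMap.fst ℝ ℝ (EuclideanSpace ℝ (Fin n)) := by
  have h1 : (fun y => F (x, y)) =ᶠ[nhds ((1 : ℝ), v)]
      fun y => m / 2 * ‖y.2‖ ^ 2 * (y.1)⁻¹ - V x.2 * y.1 := by
    have : ∀ᶠ y : ℝ × EuclideanSpace ℝ (Fin n) in nhds ((1 : ℝ), v), y.1 ≠ 0 :=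
      continuous_fst.continuousAt.eventually_ne (by simp)
    filter_upwards [this] with y hy
    rw [hFdef x y hy, div_eq_mul_inv]
  rw [h1.fderiv_eq]
  have hs : HasFDerivAt (fun y : ℝ × EuclideanSpace ℝ (Fin n) => y.2)
    (ContinuousLinearMap.snd ℝ ℝ (EuclideanSpace ℝ (Fin n))) ((1 : ℝ), v) := hasFDerivAt_snd
  have hf : HasFDerivAt (fun y : ℝ × EuclideanSpace ℝ (Fin n) => y.1)
    (ContinuousLinearMap.fst ℝ ℝ (EuclideanSpace ℝ (Fin n))) ((1 : ℝ), v) := hasFDerivAt_fst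
  have hi := (hasDerivAt_inv (one_ne_zero (α := ℝ))).comp_hasFDerivAt
    (f := fun y : ℝ × EuclideanSpace ℝ (Fin n) => y.1) ((1 : ℝ), v) hf
  have := ((hs.norm_sq.const_mul (m / 2)).mul hi).sub (hf.const_mul (V x.2))
  refine HasFDerivAt.fderiv (this.congr_fderiv ?_)
  ext h
  all_goals simp
  all_goals ring

theorem aux_el (n : ℕ) (m : ℝ) (V : EuclideanSpace ℝ (Fin n) → ℝ) (hV : ContDiff ℝ 1 V)
    (F : (ℝ × EuclideanSpace ℝ (Fin n)) × (ℝ × EuclideanSpace ℝ (Fin n)) → ℝ)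
    (hFdef : ∀ (x y : ℝ × EuclideanSpace ℝ (Fin n)), y.1 ≠ 0 →
      F (x, y) = m / 2 * ‖y.2‖ ^ 2 / y.1 - V x.2 * y.1)
    (q : ℝ → EuclideanSpace ℝ (Fin n)) (hq : ContDiff ℝ 2 q) (t : ℝ)
    (h : ℝ × EuclideanSpace ℝ (Fin n)) :
    eulerLagrange n F (fun t => (t, q t)) t h =
      - fderiv ℝ V (q t) h.2 - m * ⟪deriv (deriv q) t, h.2⟫
      + (m * ⟪deriv (deriv q) t, deriv q t⟫ + fderiv ℝ V (q t) (deriv q t)) * h.1 := by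
  have hq1 : ∀ s, HasDerivAt q (deriv q s) s := fun s =>
    (hq.differentiable (by norm_num) s).hasDerivAt
  have hq2 : HasDerivAt (deriv q) (deriv (deriv q) t) t := by
    have : ContDiff ℝ 1 (deriv q) := by
      have h2 : ContDiff ℝ (1 + 1) q := by
        convert hq using 1
        norm_num
      exact (contDiff_succ_iff_deriv.1 h2).2.2
    exact (this.differentiable (by norm_num) t).hasDerivAt
  have hσ : ∀ s, deriv (fun t => (t, q t)) s = ((1 : ℝ), deriv q s) := fun s =>
    ((hasDerivAt_id s).prodMk (hq1 s)).deriv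
  have hVd : ∀ z, HasFDerivAt V (fderiv ℝ V z) z := fun z =>
    (hV.differentiable (by norm_num) z).hasFDerivAt
  unfold eulerLagrange
  simp only [hσ, aux_fderiv n m V F hFdef]
  have hA : HasFDerivAt (fun x : ℝ × EuclideanSpace ℝ (Fin n) =>
      m • ((innerSL ℝ (deriv q t)).comp (ContinuousLinearMap.snd ℝ ℝ (EuclideanSpace ℝ (Fin n))))
      - (m / 2 * ‖deriv q t‖ ^ 2 + V x.2) •
        ContinuousLinearMap.fst ℝ ℝ (EuclideanSpace ℝ (Fin n))) _ (t, q t) :=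
    ((((hVd (q t)).comp (f := fun x : ℝ × EuclideanSpace ℝ (Fin n) => x.2) (t, q t)
      hasFDerivAt_snd).const_add (m / 2 * ‖deriv q t‖ ^ 2)).smul_const
      (ContinuousLinearMap.fst ℝ ℝ (EuclideanSpace ℝ (Fin n)))).const_sub _
  have hB : HasDerivAt (fun s => m * ⟪deriv q s, h.2⟫ -
      (m / 2 * ‖deriv q s‖ ^ 2 + V (q s)) * h.1) _ t :=
    ((hq2.inner ℝ (hasDerivAt_const t h.2)).const_mul m).sub
      (((hq2.norm_sq.const_mul (m / 2)).add
        ((hVd (q t)).comp_hasDerivAt t (hq1 t))).mul_const h.1)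
  have hB' := hB.deriv
  rw [hA.fderiv]
  simp only [ContinuousLinearMap.sub_apply, ContinuousLinearMap.smul_apply,
    ContinuousLinearMap.comp_apply, innerSL_apply_apply, ContinuousLinearMap.coe_snd',
    ContinuousLinearMap.coe_fst', smul_eq_mul]
  rw [hB']
  simp [real_inner_comm]
  ring

/-- **Newtonian mechanics as a Finsler system.**  The homogeneous Lagrangian
`F((x⁰,x⃗),(y⁰,y⃗)) = (m/2)‖y⃗‖²/y⁰ − V(x⃗)·y⁰` is positively `1`-homogeneous on `y⁰ ≠ 0`, and
the graph curve `σ(t) = (t, q(t))` satisfies its Euler–Lagrange equations on `[t₁, t₂]` iff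
`q` satisfies Newton's equation `m·q″ = −∇V(q)` there. -/
theorem newton_as_finsler
    (n : ℕ) (hn : 1 ≤ n) (m : ℝ) (hm : 0 < m)
    (V : EuclideanSpace ℝ (Fin n) → ℝ) (hV : ContDiff ℝ 1 V)
    (F : (ℝ × EuclideanSpace ℝ (Fin n)) × (ℝ × EuclideanSpace ℝ (Fin n)) → ℝ)
    (hFdef : ∀ (x y : ℝ × EuclideanSpace ℝ (Fin n)), y.1 ≠ 0 →
      F (x, y) = m / 2 * ‖y.2‖ ^ 2 / y.1 - V x.2 * y.1) :
    (∀ (l : ℝ), 0 < l → ∀ (x y : ℝ × EuclideanSpace ℝ (Fin n)), y.1 ≠ 0 →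
        F (x, l • y) = l * F (x, y))
      ∧ (∀ (q : ℝ → EuclideanSpace ℝ (Fin n)), ContDiff ℝ 2 q →
          ∀ (t₁ t₂ : ℝ), t₁ < t₂ →
            ((∀ t ∈ Set.Icc t₁ t₂, ∀ h : ℝ × EuclideanSpace ℝ (Fin n),
                eulerLagrange n F (fun t => (t, q t)) t h = 0)
              ↔ (∀ t ∈ Set.Icc t₁ t₂, ∀ w : EuclideanSpace ℝ (Fin n),
                  m * ⟪deriv (deriv q) t, w⟫ = -(fderiv ℝ V (q t) w)))) := by
  constructor
  · intro l hl x y hy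
    have hl' : l ≠ 0 := hl.ne'
    rw [hFdef x y hy, hFdef x (l • y) (by simp [hl', hy])]
    simp only [Prod.smul_fst, Prod.smul_snd, norm_smul, smul_eq_mul, Real.norm_eq_abs,
      abs_of_pos hl]
    field_simp
  · intro q hq t₁ t₂ _
    refine forall₂_congr fun t _ => ?_
    simp only [aux_el n m V hV F hFdef q hq]
    constructor
    · intro H w
      have := H (0, w)
      simp only [mul_zero, add_zero] at this
      linarith
    · intro H h
      have h1 := H h.2
      have h2 := H (deriv q t)
      rw [h1, h2]
      ring
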